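/- arXiv:2106.04061 — 2 statements merged into one kernel-verified Lean document; each statement's English description precedes it below -/
import Mathlib

section
/- Suppose D_n(𝒞) ≠ 0 for every 1 ≤ n ≤ d. Then for each 1 ≤ n ≤ d the product R_n···R_1 is invertible, so the matrix H_n(𝒞) is well-defined; H_n(𝒞) is a real symmetric 2×2 matrix with determinant 1; and there exists a positive definite real symmetric 2×2 matrix H̃_n such that H_n(𝒞) = (1/(D_{n-1}(𝒞)·D_n(𝒞)))·H̃_n. In particular, H_n(𝒞) is positive definite if and only if D_{n-1}(𝒞)·D_n(𝒞) > 0. -/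
open Complex Matrix
open scoped ComplexOrder

noncomputable section

/-- `L` from the pair `(L,r) = (d/2,1)` if `d` is even, `(d,2)` if `d` is odd. -/
def Lv (d : ℕ) : ℤ := if Even d then d / 2 else d

/-- `r` from the pair `(L,r) = (d/2,1)` if `d` is even, `(d,2)` if `d` is odd. -/
def rv (d : ℕ) : ℤ := if Even d then 1 else 2

/-- The coefficient sequence of `f_𝒞(T) = Σ_{j=0}^d C_{-(L-rj)} T^{d-j}`:
the coefficient of `T^k` is `C_{L-rk}`. -/
def coeffC (d : ℕ) (C : ℤ → ℂ) : ℕ → ℂ := fun k => C (Lv d - rv d * k)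

/-- The `n × n` upper-triangular matrix `M_n(f)`. -/
def SCM (a : ℕ → ℂ) (d n : ℕ) : Matrix (Fin n) (Fin n) ℂ :=
  Matrix.of fun j k => if (j : ℕ) ≤ (k : ℕ) then a (d - ((k : ℕ) - (j : ℕ))) else 0

/-- The `n × n` upper-triangular matrix `N_n(f)`. -/
def SCN (a : ℕ → ℂ) (n : ℕ) : Matrix (Fin n) (Fin n) ℂ :=
  Matrix.of fun j k => if (j : ℕ) ≤ (k : ℕ) then a ((k : ℕ) - (j : ℕ)) else 0

/-- `L_n^ε(f)`, with `ε = 1` for `L_n^+` and `ε = -1` for `L_n^-`. -/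
def SCL (a : ℕ → ℂ) (d n : ℕ) (ε : ℂ) : Matrix (Fin n ⊕ Fin n) (Fin n ⊕ Fin n) ℂ :=
  Matrix.fromBlocks (SCM a d n)ᵀ (ε • (SCN a n)ᴴ) (ε • SCN a n)
    ((SCM a d n).map (starRingEnd ℂ))

/-- The Schur–Cohn determinant `D_n(𝒞)`, with `D_0(𝒞) = 1`. -/
def SCD (d : ℕ) (C : ℤ → ℂ) (n : ℕ) : ℂ :=
  if n = 0 then 1 else (SCL (coeffC d C) d n 1).det

/-- The vector `ᵗ(z(1), ..., z(n), conj(z(n)), ..., conj(z(1)))` of length `2n`. -/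
def symVec (n : ℕ) (z : ℕ → ℂ) : Fin n ⊕ Fin n → ℂ :=
  Sum.elim (fun i => z (i : ℕ)) (fun i => (starRingEnd ℂ) (z ((i : Fin n).rev : ℕ)))

/-- The vector `ᵗ(0, ..., 0, 2·conj(C_L), 2·C_L, 0, ..., 0)` of length `2n`, with the
nonzero entries in positions `n` and `n+1`. -/
def rhsVec (d n : ℕ) (C : ℤ → ℂ) : Fin n ⊕ Fin n → ℂ :=
  Sum.elim (fun i => if (i : ℕ) + 1 = n then 2 * (starRingEnd ℂ) (C (Lv d)) else 0)
    (fun i => if (i : ℕ) = 0 then 2 * C (Lv d) else 0)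

/-- `R_k = [[Re z_k^+(1), Im z_k^+(1)],[−Im z_k^-(1), Re z_k^-(1)]]`, where
`zp k` and `zm k` are the (0-based) solution sequences `z_k^+` and `z_k^-`. -/
def Rmat (zp zm : ℕ → ℕ → ℂ) (k : ℕ) : Matrix (Fin 2) (Fin 2) ℝ :=
  !![(zp k 0).re, (zp k 0).im; -(zm k 0).im, (zm k 0).re]

/-- The ordered product `R_n · R_{n-1} ⋯ R_1`. -/
def Rprod (zp zm : ℕ → ℕ → ℂ) (n : ℕ) : Matrix (Fin 2) (Fin 2) ℝ :=
  ((List.range n).map (fun i => Rmat zp zm (n - i))).prod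

/-- `H_n(𝒞)`, defined (when `R_n ⋯ R_1` is invertible) as the unique matrix with
`(R_n⋯R_1)·[[0,−1],[1,0]]·H_n = [[0,1],[−1,0]]·(R_n⋯R_1)`. -/
def Hmat (zp zm : ℕ → ℕ → ℂ) (n : ℕ) : Matrix (Fin 2) (Fin 2) ℝ :=
  (!![(0:ℝ), -1; 1, 0])⁻¹ * (Rprod zp zm n)⁻¹ * !![(0:ℝ), 1; -1, 0] * Rprod zp zm n

lemma scl_det_conj (a : ℕ → ℂ) (d n : ℕ) :
    (starRingEnd ℂ) (SCL a d n 1).det = (SCL a d n 1).det := by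
  let e : Fin n ⊕ Fin n ≃ Fin n ⊕ Fin n :=
    (Equiv.sumComm _ _).trans (Equiv.sumCongr Fin.revPerm Fin.revPerm)
  have h : (SCL a d n 1).map (starRingEnd ℂ) = (SCL a d n 1).submatrix e e := by
    ext i j
    have h1 : ∀ i j : Fin n, n - ((i : ℕ) + 1) - (n - ((j : ℕ) + 1)) = (j : ℕ) - i := by
      intro i j; have := i.2; have := j.2; omega
    rcases i with i | i <;> rcases j with j | j <;>
      simp [e, SCL, SCM, SCN, Matrix.transpose_apply, Matrix.conjTranspose_apply, h1]
  rw [RingHom.map_det]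
  change ((SCL a d n 1).map (starRingEnd ℂ)).det = _
  rw [h, Matrix.det_submatrix_equiv_self]

def idxF (m : ℕ) : Fin 4 ⊕ (Fin m ⊕ Fin m) → Fin (m+2) ⊕ Fin (m+2) :=
  Sum.elim ![Sum.inl 0, Sum.inl (Fin.last _), Sum.inr 0, Sum.inr (Fin.last _)]
    (Sum.map (fun i => i.castSucc.succ) (fun i => i.castSucc.succ))

lemma idxF_bij (m : ℕ) : Function.Bijective (idxF m) := by
  rw [Fintype.bijective_iff_injective_and_card]
  constructor
  · rintro (i | i | i) (j | j | j) h
    · fin_cases i <;> fin_cases j <;> simp_all [idxF, Fin.ext_iff]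
    · have := j.2
      fin_cases i <;> simp [idxF, Fin.ext_iff] at h <;> omega
    · have := j.2
      fin_cases i <;> simp [idxF, Fin.ext_iff] at h <;> omega
    · have := i.2
      fin_cases j <;> simp [idxF, Fin.ext_iff] at h <;> omega
    · simpa [idxF, Fin.ext_iff] using h
    · simp [idxF] at h
    · have := i.2
      fin_cases j <;> simp [idxF, Fin.ext_iff] at h <;> omega
    · simp [idxF] at h
    · simpa [idxF, Fin.ext_iff] using h
  · simp; ring

/-- The key block determinant identity. -/
lemma key_block {m : ℕ} (L : Matrix (Fin 4 ⊕ (Fin m ⊕ Fin m)) (Fin 4 ⊕ (Fin m ⊕ Fin m)) ℂ)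
    (b c : ℂ) (hb : b ≠ 0) (hc : c ≠ 0)
    (p q : Fin 4 ⊕ (Fin m ⊕ Fin m) → ℂ)
    (hp : L.mulVec p = Sum.elim ![0, -2*b, -2*c, 0] 0)
    (hq : L.mulVec q = Sum.elim ![0, 2*b, -2*c, 0] 0)
    (h01 : L (Sum.inl 0) (Sum.inl 1) = 0) (h02 : L (Sum.inl 0) (Sum.inl 2) = b)
    (h31 : L (Sum.inl 3) (Sum.inl 1) = c) (h32 : L (Sum.inl 3) (Sum.inl 2) = 0)
    (h0 : ∀ j, L (Sum.inl 0) (Sum.inr j) = 0) (h3 : ∀ j, L (Sum.inl 3) (Sum.inr j) = 0) :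
    L.det * (p (Sum.inl 0) * q (Sum.inl 3) - q (Sum.inl 0) * p (Sum.inl 3)) =
      -(8 * b^2 * c^2) * (L.toBlocks₂₂).det := by
  let X4 : Matrix (Fin 4) (Fin 4) ℂ := Matrix.of fun i => 
    ![p (Sum.inl i), (1 : Matrix (Fin 4) (Fin 4) ℂ) i 1, (1 : Matrix (Fin 4) (Fin 4) ℂ) i 2, q (Sum.inl i)]
  let X2 : Matrix (Fin m ⊕ Fin m) (Fin 4) ℂ := Matrix.of fun i => 
    ![p (Sum.inr i), 0, 0, q (Sum.inr i)]
  let O : Matrix (Fin 4) (Fin 4) ℂ := 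
    !![0, 0, b, 0; -2*b, L (Sum.inl 1) (Sum.inl 1), L (Sum.inl 1) (Sum.inl 2), 2*b;
      -2*c, L (Sum.inl 2) (Sum.inl 1), L (Sum.inl 2) (Sum.inl 2), -2*c; 0, c, 0, 0]
  let S : Matrix (Fin m ⊕ Fin m) (Fin 4) ℂ := Matrix.of fun i => 
    ![0, L (Sum.inr i) (Sum.inl 1), L (Sum.inr i) (Sum.inl 2), 0]
  let W : Matrix (Fin 4) (Fin m ⊕ Fin m) ℂ := Matrix.of fun i j =>
    ![-(L (Sum.inl 1) (Sum.inr j) / b + L (Sum.inl 2) (Sum.inr j) / c) / 4, 0, 0,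
      (L (Sum.inl 1) (Sum.inr j) / b - L (Sum.inl 2) (Sum.inr j) / c) / 4] i
  have w0 : ∀ j, W 0 j =
      -(L (Sum.inl 1) (Sum.inr j) / b + L (Sum.inl 2) (Sum.inr j) / c) / 4 := fun _ => rfl
  have w1 : ∀ j, W 1 j = 0 := fun _ => rfl
  have w2 : ∀ j, W 2 j = 0 := fun _ => rfl
  have w3 : ∀ j, W 3 j =
      (L (Sum.inl 1) (Sum.inr j) / b - L (Sum.inl 2) (Sum.inr j) / c) / 4 := fun _ => rfl
  have hX : (fromBlocks X4 0 X2 1).det =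
      p (Sum.inl 0) * q (Sum.inl 3) - q (Sum.inl 0) * p (Sum.inl 3) := by
    rw [Matrix.det_fromBlocks_zero₁₂, Matrix.det_one, mul_one]
    simp [X4, Matrix.det_succ_row_zero, Fin.sum_univ_succ, Fin.succAbove, Matrix.one_apply]
    try ring
  have hO : O.det = -(8 * b^2 * c^2) := by
    simp [O, Matrix.det_succ_row_zero, Fin.sum_univ_succ, Fin.succAbove]
    ring
  have hp' : ∀ i, ∑ x, L i (Sum.inl x) * p (Sum.inl x) + ∑ x, L i (Sum.inr x) * p (Sum.inr x)
      = (Sum.elim ![0, -2*b, -2*c, 0] 0 : Fin 4 ⊕ (Fin m ⊕ Fin m) → ℂ) i := by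
    intro i
    rw [← hp]; exact (Fintype.sum_sum_type (fun x => L i x * p x)).symm
  have hq' : ∀ i, ∑ x, L i (Sum.inl x) * q (Sum.inl x) + ∑ x, L i (Sum.inr x) * q (Sum.inr x)
      = (Sum.elim ![0, 2*b, -2*c, 0] 0 : Fin 4 ⊕ (Fin m ⊕ Fin m) → ℂ) i := by
    intro i
    rw [← hq]; exact (Fintype.sum_sum_type (fun x => L i x * q x)).symm
  have hmul : L * fromBlocks X4 0 X2 1 =
      fromBlocks O 0 S L.toBlocks₂₂ * fromBlocks 1 W 0 1 := by
    rw [Matrix.fromBlocks_multiply]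
    ext i j
    rw [Matrix.mul_apply, Fintype.sum_sum_type]
    rcases j with j | j
    · have e0 := hp' i
      have e3 := hq' i
      rcases i with i | i
      · fin_cases j
        · simp only [fromBlocks_apply₁₁, fromBlocks_apply₂₁]
          refine Eq.trans e0 ?_
          fin_cases i <;> simp [O]
        · simp [X4, X2, Matrix.one_apply]
          fin_cases i <;> simp [O, h01, h31]
        · simp [X4, X2, Matrix.one_apply]
          fin_cases i <;> simp [O, h02, h32]
        · simp only [fromBlocks_apply₁₁, fromBlocks_apply₂₁]
          refine Eq.trans e3 ?_
          fin_cases i <;> simp [O]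
      · fin_cases j
        · simp only [fromBlocks_apply₁₁, fromBlocks_apply₂₁]
          refine Eq.trans e0 ?_
          simp [S]
        · simp [X4, X2, Matrix.one_apply, S]
        · simp [X4, X2, Matrix.one_apply, S]
        · simp only [fromBlocks_apply₁₁, fromBlocks_apply₂₁]
          refine Eq.trans e3 ?_
          simp [S]
    · rcases i with i | i
      · clear_value W
        fin_cases i <;> simp [Matrix.one_apply, O, w0, w1, w2, w3, Matrix.mul_apply, Matrix.vecMul, dotProduct,
          Fin.sum_univ_four, h0, h3] <;> (try field_simp) <;> (try ring)
      · clear_value W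
        simp [Matrix.one_apply, S, w0, w1, w2, w3, Matrix.mul_apply, Fin.sum_univ_four,
          Matrix.toBlocks₂₂]
  have := congrArg Matrix.det hmul
  rw [Matrix.det_mul, Matrix.det_mul, hX, Matrix.det_fromBlocks_zero₁₂,
    Matrix.det_fromBlocks_zero₂₁, hO] at this
  simpa using this

lemma scl_block (a : ℕ → ℂ) (d m : ℕ) :
    ((SCL a d (m+2) 1).submatrix (idxF m) (idxF m)).toBlocks₂₂ = SCL a d m 1 := by
  ext i j
  rcases i with i | i <;> rcases j with j | j <;>
    simp [idxF, Matrix.toBlocks₂₂, SCL, SCM, SCN, Matrix.transpose_apply,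
      Matrix.conjTranspose_apply]

lemma scl_neg (a : ℕ → ℂ) (d n : ℕ) (u v : Fin n → ℂ) :
    (SCL a d n 1).mulVec (Sum.elim u (-v)) =
      Sum.elim (((SCL a d n (-1)).mulVec (Sum.elim u v)) ∘ Sum.inl)
        (-(((SCL a d n (-1)).mulVec (Sum.elim u v)) ∘ Sum.inr)) := by
  simp only [SCL, Matrix.fromBlocks_mulVec]
  ext i
  rcases i with i | i <;> simp [Matrix.mulVec_neg, Matrix.neg_mulVec, add_comm]

lemma det_Rmat (zp zm : ℕ → ℕ → ℂ) (n : ℕ) :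
    (-2 * ((Rmat zp zm n).det : ℂ)) =
      zp n 0 * (-(starRingEnd ℂ) (zm n 0)) - zm n 0 * (starRingEnd ℂ) (zp n 0) := by
  apply Complex.ext <;> simp [Rmat, Matrix.det_fin_two] <;> ring

lemma hzm' {d n : ℕ} {C : ℤ → ℂ} {z : ℕ → ℂ}
    (h : (SCL (coeffC d C) d n (-1)).mulVec (symVec n z) = rhsVec d n C) :
    (SCL (coeffC d C) d n 1).mulVec
      (Sum.elim (fun i : Fin n => z (i : ℕ)) (-(fun i => (starRingEnd ℂ) (z ((i : Fin n).rev : ℕ)))))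
      = Sum.elim (fun i : Fin n => if (i : ℕ) + 1 = n then 2 * (starRingEnd ℂ) (C (Lv d)) else 0)
          (-(fun i : Fin n => if (i : ℕ) = 0 then 2 * C (Lv d) else 0)) := by
  rw [scl_neg]
  change Sum.elim (((SCL (coeffC d C) d n (-1)).mulVec (symVec n z)) ∘ Sum.inl)
        (-(((SCL (coeffC d C) d n (-1)).mulVec (symVec n z)) ∘ Sum.inr)) = _
  rw [h]
  rfl

lemma SCD_eq (d : ℕ) (C : ℤ → ℂ) (n : ℕ) : SCD d C n = (SCL (coeffC d C) d n 1).det := by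
  unfold SCD
  split_ifs with h
  · subst h; simp
  · rfl

lemma mulVec_idxF {m : ℕ} (L : Matrix (Fin (m+2) ⊕ Fin (m+2)) (Fin (m+2) ⊕ Fin (m+2)) ℂ) (p) :
    (L.submatrix (idxF m) (idxF m)).mulVec (p ∘ idxF m) = (L.mulVec p) ∘ idxF m := by
  have := Matrix.submatrix_mulVec_equiv L (p ∘ idxF m) (idxF m)
    (Equiv.ofBijective _ (idxF_bij m))
  refine this.trans ?_
  congr 2
  ext i
  simp only [Function.comp]
  exact congrArg p ((Equiv.ofBijective _ (idxF_bij m)).apply_symm_apply i)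

lemma step (d : ℕ) (C : ℤ → ℂ) (hC : C (Lv d) ≠ 0) (m : ℕ) (zp zm : ℕ → ℕ → ℂ)
    (hp : (SCL (coeffC d C) d (m+2) 1).mulVec (symVec (m+2) (zp (m+2))) = -(rhsVec d (m+2) C))
    (hm : (SCL (coeffC d C) d (m+2) (-1)).mulVec (symVec (m+2) (zm (m+2))) = rhsVec d (m+2) C) :
    SCD d C (m+2) * ((Rmat zp zm (m+2)).det : ℂ) =
      4 * ((starRingEnd ℂ) (C (Lv d)) * C (Lv d))^2 * SCD d C m := by
  have hm' := hzm' hm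
  have e0 : coeffC d C 0 = C (Lv d) := by simp [coeffC]
  have := key_block ((SCL (coeffC d C) d (m+2) 1).submatrix (idxF m) (idxF m))
    ((starRingEnd ℂ) (C (Lv d))) (C (Lv d)) (by simpa using hC) hC
    (symVec (m+2) (zp (m+2)) ∘ idxF m)
    (Sum.elim (fun i : Fin (m+2) => zm (m+2) (i : ℕ))
      (-(fun i => (starRingEnd ℂ) (zm (m+2) ((i : Fin (m+2)).rev : ℕ)))) ∘ idxF m)
    (by
      rw [mulVec_idxF, hp]
      ext i
      rcases i with i | i | i
      · fin_cases i <;> simp [idxF, rhsVec]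
      · have := i.2
        simp [idxF, rhsVec]; omega
      · simp [idxF, rhsVec])
    (by
      rw [mulVec_idxF, hm']
      ext i
      rcases i with i | i | i
      · fin_cases i <;> simp [idxF]
      · have := i.2
        simp [idxF]; omega
      · simp [idxF])
    (by simp [idxF, SCL, SCM, SCN]) (by simp [idxF, SCL, SCM, SCN, e0])
    (by simp [idxF, SCL, SCM, SCN, e0]) (by simp [idxF, SCL, SCM, SCN])
    (by rintro (j | j) <;> simp [idxF, SCL, SCM, SCN])
    (by
      rintro (j | j) <;> have := j.2 <;> simp [idxF, SCL, SCM, SCN] <;> intros <;> omega)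
  rw [scl_block, ← SCD_eq] at this
  have hdet : ((SCL (coeffC d C) d (m+2) 1).submatrix (idxF m) (idxF m)).det
      = SCD d C (m+2) := by
    rw [SCD_eq]
    exact Matrix.det_submatrix_equiv_self (Equiv.ofBijective _ (idxF_bij m)) _
  rw [hdet] at this
  have h2 := det_Rmat zp zm (m+2)
  simp [idxF, symVec] at this
  linear_combination (-1/2) * this - (1/2) * SCD d C (m+2) * h2

lemma base (d : ℕ) (C : ℤ → ℂ) (zp zm : ℕ → ℕ → ℂ)
    (hp : (SCL (coeffC d C) d 1 1).mulVec (symVec 1 (zp 1)) = -(rhsVec d 1 C))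
    (hm : (SCL (coeffC d C) d 1 (-1)).mulVec (symVec 1 (zm 1)) = rhsVec d 1 C) :
    SCD d C 1 * ((Rmat zp zm 1).det : ℂ) = -4 * ((starRingEnd ℂ) (C (Lv d)) * C (Lv d)) := by
  have e0 : coeffC d C 0 = C (Lv d) := by simp [coeffC]
  have h2 := det_Rmat zp zm 1
  have p0 := congrFun hp (Sum.inl 0)
  have p1 := congrFun hp (Sum.inr 0)
  have m0 := congrFun hm (Sum.inl 0)
  have m1 := congrFun hm (Sum.inr 0)
  have hdet : SCD d C 1 = coeffC d C d * (starRingEnd ℂ) (coeffC d C d)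
      - (starRingEnd ℂ) (C (Lv d)) * C (Lv d) := by
    rw [SCD_eq, ← Matrix.det_submatrix_equiv_self (finSumFinEquiv (m := 1) (n := 1)).symm]
    refine (Matrix.det_fin_two _).trans ?_
    have k0 : (finSumFinEquiv (m := 1) (n := 1)).symm 0 = Sum.inl 0 := rfl
    have k1 : (finSumFinEquiv (m := 1) (n := 1)).symm 1 = Sum.inr 0 := rfl
    simp [k0, k1, SCL, SCM, SCN, e0]
  simp [Matrix.mulVec, dotProduct, SCL, SCM, SCN, symVec, rhsVec, e0] at p0 p1 m0 m1
  rw [hdet]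
  generalize (starRingEnd ℂ) (C (Lv d)) = b at *
  generalize C (Lv d) = c at *
  generalize coeffC d C d = g at *
  generalize (starRingEnd ℂ) g = g' at *
  generalize (starRingEnd ℂ) (zp 1 0) = u' at *
  generalize (starRingEnd ℂ) (zm 1 0) = v' at *
  generalize zp 1 0 = u at *
  generalize zm 1 0 = v at *
  have key : (g * g' - b * c) * (u * (-v') - v * u') = 8 * (b * c) := by
    have : (g * g' - b * c) * (u * (-v') - v * u') =
      (g * u + b * u') * (-(-(c * v) + g' * v')) - (g * v + -(b * v')) * (c * u + g' * u') := by ring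
    rw [this, p0, p1, m0, m1]; ring
  rw [← h2] at key
  linear_combination (-1/2) * key

lemma Rprod_succ (zp zm : ℕ → ℕ → ℂ) (n : ℕ) :
    Rprod zp zm (n+1) = Rmat zp zm (n+1) * Rprod zp zm n := by
  simp [Rprod, List.range_succ_eq_map, Function.comp_def]

lemma final_part (P : Matrix (Fin 2) (Fin 2) ℝ) (k : ℝ) (hk : 0 < -(P.det * k)) :
    ∃ H : Matrix (Fin 2) (Fin 2) ℝ,
      H = (!![(0:ℝ), -1; 1, 0])⁻¹ * P⁻¹ * !![(0:ℝ), 1; -1, 0] * P ∧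
      IsUnit P ∧ P * !![(0:ℝ), -1; 1, 0] * H = !![(0:ℝ), 1; -1, 0] * P ∧
      (∀ H' : Matrix (Fin 2) (Fin 2) ℝ,
        P * !![(0:ℝ), -1; 1, 0] * H' = !![(0:ℝ), 1; -1, 0] * P → H' = H) ∧
      H.IsSymm ∧ H.det = 1 ∧
      (∃ Ht : Matrix (Fin 2) (Fin 2) ℝ, Ht.PosDef ∧ Ht.IsSymm ∧ H = k⁻¹ • Ht) ∧
      (H.PosDef ↔ 0 < k) := by
  have hk0 : k ≠ 0 := by rintro rfl; simp at hk
  have hP0 : P.det ≠ 0 := by intro h; simp [h] at hk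
  have hPu : IsUnit P.det := isUnit_iff_ne_zero.mpr hP0
  have hJ : IsUnit (!![(0:ℝ), -1; 1, 0]).det := by simp [Matrix.det_fin_two]
  have huniq : ∀ H' : Matrix (Fin 2) (Fin 2) ℝ,
      P * !![(0:ℝ), -1; 1, 0] * H' = !![(0:ℝ), 1; -1, 0] * P →
      H' = (!![(0:ℝ), -1; 1, 0])⁻¹ * P⁻¹ * !![(0:ℝ), 1; -1, 0] * P := by
    intro H' h
    rw [Matrix.mul_assoc (_ * P⁻¹), ← h, ← Matrix.mul_inv_rev, ← Matrix.mul_assoc,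
      Matrix.nonsing_inv_mul, Matrix.one_mul]
    rw [Matrix.det_mul]; exact hPu.mul hJ
  have hrel : P * !![(0:ℝ), -1; 1, 0] * ((-(P.det)⁻¹) • (Pᵀ * P)) = !![(0:ℝ), 1; -1, 0] * P := by
    have : P * !![(0:ℝ), -1; 1, 0] * Pᵀ = P.det • !![(0:ℝ), -1; 1, 0] := by
      ext i j
      fin_cases i <;> fin_cases j <;>
        simp [Matrix.mul_apply, Fin.sum_univ_two, Matrix.det_fin_two] <;> ring
    rw [Matrix.mul_smul, ← Matrix.mul_assoc, this, Matrix.smul_mul, smul_smul]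
    have : -(P.det)⁻¹ * P.det = -1 := by field_simp
    rw [this]
    ext i j
    fin_cases i <;> fin_cases j <;>
      simp [Matrix.mul_apply, Matrix.vecMul, dotProduct, Fin.sum_univ_two]
  have hpd : (Pᵀ * P).PosDef := by
    have := Matrix.PosDef.conjTranspose_mul_self P
      (Matrix.mulVec_injective_iff_isUnit.mpr ((Matrix.isUnit_iff_isUnit_det P).mpr hPu))
    simpa [Matrix.conjTranspose_eq_transpose_of_trivial] using this
  have hc : 0 < -(P.det)⁻¹ * k := by
    have : -(P.det)⁻¹ * k = (-(P.det * k)) * ((P.det)⁻¹)^2 := by field_simp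
    rw [this]; positivity
  have hsym : (Pᵀ * P).IsSymm := Matrix.isSymm_transpose_mul_self P
  have hHt : (-(P.det)⁻¹) • (Pᵀ * P) = k⁻¹ • ((-(P.det)⁻¹ * k) • (Pᵀ * P)) := by
    rw [smul_smul]; congr 1; field_simp
  refine ⟨(-(P.det)⁻¹) • (Pᵀ * P), huniq _ hrel, (Matrix.isUnit_iff_isUnit_det P).mpr hPu, hrel,
    ?_, hsym.smul _, ?_, ⟨(-(P.det)⁻¹ * k) • (Pᵀ * P), hpd.smul hc, hsym.smul _, hHt⟩, ?_⟩
  · intro H' h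
    rw [huniq _ h, ← huniq _ hrel]
  · rw [Matrix.det_smul, Matrix.det_mul, Matrix.det_transpose]
    simp; field_simp
  · constructor
    · intro h
      have h1 := h.diag_pos (i := 0)
      have h2 := hpd.diag_pos (i := 0)
      rw [Matrix.smul_apply, smul_eq_mul] at h1
      have h3 : 0 < -(P.det)⁻¹ := pos_of_mul_pos_left h1 h2.le
      exact pos_of_mul_pos_right hc h3.le
    · intro h
      rw [hHt]
      exact (hpd.smul hc).smul (inv_pos.mpr h)

/-- Suppose `D_n(𝒞) ≠ 0` for every `1 ≤ n ≤ d`.  Then for each `1 ≤ n ≤ d` the product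
`R_n⋯R_1` is invertible, so that `H_n(𝒞)` is well-defined (it satisfies the defining
relation, uniquely); `H_n(𝒞)` is real symmetric of determinant `1`; there is a positive
definite real symmetric matrix `H̃_n` with `H_n(𝒞) = (1/(D_{n-1}(𝒞)·D_n(𝒞)))·H̃_n`; and
`H_n(𝒞)` is positive definite iff `D_{n-1}(𝒞)·D_n(𝒞) > 0`. -/
theorem Hmat_wellDefined_symm_det_one_posdef
    (d : ℕ) (hd : 0 < d) (C : ℤ → ℂ) (hC : C (Lv d) * C (-(Lv d)) ≠ 0)
    (hD : ∀ n, 1 ≤ n → n ≤ d → SCD d C n ≠ 0)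
    (zp zm : ℕ → ℕ → ℂ)
    (hzp : ∀ n, 1 ≤ n → n ≤ d →
      (SCL (coeffC d C) d n 1).mulVec (symVec n (zp n)) = -(rhsVec d n C))
    (hzm : ∀ n, 1 ≤ n → n ≤ d →
      (SCL (coeffC d C) d n (-1)).mulVec (symVec n (zm n)) = rhsVec d n C) :
    ∀ n, 1 ≤ n → n ≤ d →
      IsUnit (Rprod zp zm n) ∧
      Rprod zp zm n * !![(0:ℝ), -1; 1, 0] * Hmat zp zm n
        = !![(0:ℝ), 1; -1, 0] * Rprod zp zm n ∧
      (∀ H' : Matrix (Fin 2) (Fin 2) ℝ,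
        Rprod zp zm n * !![(0:ℝ), -1; 1, 0] * H' = !![(0:ℝ), 1; -1, 0] * Rprod zp zm n →
        H' = Hmat zp zm n) ∧
      (Hmat zp zm n).IsSymm ∧ (Hmat zp zm n).det = 1 ∧
      (∃ Ht : Matrix (Fin 2) (Fin 2) ℝ, Ht.PosDef ∧ Ht.IsSymm ∧
        ∀ i j, ((Hmat zp zm n i j : ℂ)) = (SCD d C (n - 1) * SCD d C n)⁻¹ * (Ht i j : ℂ)) ∧
      ((Hmat zp zm n).PosDef ↔ 0 < SCD d C (n - 1) * SCD d C n) := by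
  have hC0 : C (Lv d) ≠ 0 := left_ne_zero_of_mul hC
  obtain ⟨δ, hδ⟩ : ∃ δ : ℕ → ℝ, ∀ n, SCD d C n = (δ n : ℂ) := by
    refine ⟨fun n => (SCD d C n).re, fun n => ?_⟩
    have := scl_det_conj (coeffC d C) d n
    rw [← SCD_eq] at this
    exact (Complex.conj_eq_iff_re.mp this).symm
  set s : ℝ := Complex.normSq (C (Lv d)) with hs
  have hspos : 0 < s := Complex.normSq_pos.mpr hC0
  have hsc : (starRingEnd ℂ) (C (Lv d)) * C (Lv d) = (s : ℂ) := by
    rw [hs, Complex.normSq_eq_conj_mul_self]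
  have main : ∀ n, n + 1 ≤ d → 0 < -((Rprod zp zm (n+1)).det * (δ n * δ (n+1))) := by
    intro n
    induction n with
    | zero =>
      intro h
      have hb := base d C zp zm (hzp 1 le_rfl h) (hzm 1 le_rfl h)
      rw [hδ, hsc] at hb
      have hb' : δ 1 * (Rmat zp zm 1).det = -4 * s := by exact_mod_cast hb
      have h0 : δ 0 = 1 := by
        have := hδ 0
        simp [SCD] at this
        exact_mod_cast this.symm
      have hR : Rprod zp zm (0+1) = Rmat zp zm 1 := by simp [Rprod]
      rw [hR, h0]
      simp only [zero_add]
      nlinarith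
    | succ m ih =>
      intro h
      have hi := ih (by omega)
      have hb := step d C hC0 m zp zm (hzp (m+2) (by omega) h) (hzm (m+2) (by omega) h)
      rw [hδ, hδ, hsc] at hb
      have hb' : δ (m+2) * (Rmat zp zm (m+2)).det = 4 * s^2 * δ m := by exact_mod_cast hb
      rw [Rprod_succ, Matrix.det_mul]
      have : -((Rmat zp zm (m+1+1)).det * (Rprod zp zm (m+1)).det * (δ (m+1) * δ (m+1+1)))
        = 4 * s^2 * -((Rprod zp zm (m+1)).det * (δ m * δ (m+1))) := by
        linear_combination (-(Rprod zp zm (m+1)).det * δ (m+1)) * hb'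
      rw [this]
      positivity
  intro n hn1 hnd
  obtain ⟨m, rfl⟩ : ∃ m, n = m + 1 := ⟨n - 1, by omega⟩
  obtain ⟨H, hH, h1, h2, h3, h4, h5, ⟨Ht, h6, h7, h8⟩, h9⟩ := final_part _ _ (main m hnd)
  have hH' : H = Hmat zp zm (m+1) := hH
  subst hH'
  simp only [Nat.add_sub_cancel]
  rw [hδ m, hδ (m+1)]
  refine ⟨h1, h2, h3, h4, h5, ⟨Ht, h6, h7, ?_⟩, ?_⟩
  · intro i j
    rw [h8]
    simp
  · rw [h9]
    norm_cast

end
end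

section
/- Let 0 ≤ n ≤ d and suppose D_n(𝒞) ≠ 0. Then p_n^+(k) + conj(q_n^+(k)) = p_n^-(k) − conj(q_n^-(k)) for every k with −(d+r−1)/2 ≤ k ≤ (d−r+1)/2 + n − 1. -/
open Complex Matrix

noncomputable section

/-- The `2d × 2d` lower-triangular Toeplitz matrix `𝔢₀(𝒞)` with `(j,k)`-entry
`C_{−L+r(j−k)}` when `0 ≤ j−k ≤ d` and `0` otherwise. -/
def e0mat (d : ℕ) (C : ℤ → ℂ) : Matrix (Fin (2 * d)) (Fin (2 * d)) ℂ :=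
  Matrix.of fun j k =>
    if (k : ℕ) ≤ (j : ℕ) ∧ (j : ℕ) - (k : ℕ) ≤ d then
      C (-(Lv d) + rv d * ((j : ℕ) - (k : ℕ) : ℕ)) else 0

/-- The `2d × 2d` matrix `𝔢_{1,n}(𝒞)` whose only nonzero entries are the
`(m+j, d+m)`-entries (1-based), equal to `C_{L−rj}`, for `1 ≤ m ≤ n`, `0 ≤ j ≤ d`. -/
def e1mat (d n : ℕ) (C : ℤ → ℂ) : Matrix (Fin (2 * d)) (Fin (2 * d)) ℂ :=
  Matrix.of fun j k =>
    if d ≤ (k : ℕ) ∧ (k : ℕ) + 1 ≤ d + n ∧ (k : ℕ) ≤ (j : ℕ) + d ∧ (j : ℕ) ≤ (k : ℕ) then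
      C (Lv d - rv d * ((j : ℤ) - (k : ℤ) + d)) else 0

/-- The `2d × 2d` matrix `𝔢_{2,n}(𝒞)` whose only nonzero entries are the
`(d−n+m+j, 2d−n+m)`-entries (1-based), equal to `C_{L−rj}`, for `1 ≤ m ≤ n`, `0 ≤ j ≤ d`. -/
def e2mat (d n : ℕ) (C : ℤ → ℂ) : Matrix (Fin (2 * d)) (Fin (2 * d)) ℂ :=
  Matrix.of fun j k =>
    if 2 * d ≤ (k : ℕ) + n ∧ (k : ℕ) ≤ (j : ℕ) + d ∧ (j : ℕ) ≤ (k : ℕ) then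
      C (Lv d - rv d * ((j : ℤ) - (k : ℤ) + d)) else 0

/-- The `2d × 2d` anti-diagonal matrix `J_{2d}`. -/
def Jmat (d : ℕ) : Matrix (Fin (2 * d)) (Fin (2 * d)) ℂ :=
  Matrix.of fun j k => if (j : ℕ) + (k : ℕ) + 1 = 2 * d then 1 else 0

/-- The `8d × 8d` matrix `𝔈₀(𝒞) = blockdiag(𝔢₀, 𝔢₀, ᵗconj(𝔢₀), ᵗconj(𝔢₀))`, indexed by
`Fin 4 × Fin (2d)` (the first coordinate is the block index). -/
def bigE0 (d : ℕ) (C : ℤ → ℂ) :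
    Matrix (Fin 4 × Fin (2 * d)) (Fin 4 × Fin (2 * d)) ℂ :=
  Matrix.of fun p q =>
    if p.1 = q.1 then
      (if (p.1 : ℕ) ≤ 1 then e0mat d C p.2 q.2 else (e0mat d C)ᴴ p.2 q.2)
    else 0

/-- The `8d × 8d` matrix `𝔈ₙ^♯(𝒞)` with `(1,3)`-block `conj(𝔢_{2,n})`, `(2,4)`-block
`conj(𝔢_{1,n})`, `(3,1)`-block `J_{2d}·𝔢_{1,n}·J_{2d}`, `(4,2)`-block `J_{2d}·𝔢_{2,n}·J_{2d}`,
and all other blocks zero. -/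
def bigEsharp (d n : ℕ) (C : ℤ → ℂ) :
    Matrix (Fin 4 × Fin (2 * d)) (Fin 4 × Fin (2 * d)) ℂ :=
  Matrix.of fun p q =>
    if p.1 = 0 ∧ q.1 = 2 then ((e2mat d n C).map (starRingEnd ℂ)) p.2 q.2
    else if p.1 = 1 ∧ q.1 = 3 then ((e1mat d n C).map (starRingEnd ℂ)) p.2 q.2
    else if p.1 = 2 ∧ q.1 = 0 then (Jmat d * e1mat d n C * Jmat d) p.2 q.2
    else if p.1 = 3 ∧ q.1 = 1 then (Jmat d * e2mat d n C * Jmat d) p.2 q.2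
    else 0

/-- The vector `χ ∈ ℂ^{8d}` with first and last entries `1` and all other entries `0`. -/
def chiVec (d : ℕ) : Fin 4 × Fin (2 * d) → ℂ := fun p =>
  if (p.1 = 0 ∧ (p.2 : ℕ) = 0) ∨ (p.1 = 3 ∧ (p.2 : ℕ) + 1 = 2 * d) then 1 else 0

/-- The `8d × 8d` matrix `𝔍 = [[0, I_{4d}],[I_{4d}, 0]]` (swapping blocks `0 ↔ 2`, `1 ↔ 3`). -/
def bigJ (d : ℕ) : Matrix (Fin 4 × Fin (2 * d)) (Fin 4 × Fin (2 * d)) ℂ :=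
  Matrix.of fun p q => if ((p.1 : ℕ) + 2) % 4 = (q.1 : ℕ) ∧ p.2 = q.2 then 1 else 0

/-- `p_n^±(k)`: the `(k + (d+r+1)/2)`-th entry (1-based) of a vector `Ψ ∈ ℂ^{8d}`,
lying in the first block of `2d` entries. -/
def pEnt (d : ℕ) (Ψ : Fin 4 × Fin (2 * d) → ℂ) (k : ℤ) : ℂ :=
  if h : ((k + ((d : ℤ) + rv d - 1) / 2).toNat) < 2 * d then
    Ψ (0, ⟨(k + ((d : ℤ) + rv d - 1) / 2).toNat, h⟩) else 0

/-- `q_n^±(k)`: the `(2d + (3d−r+1)/2 − k)`-th entry (1-based) of a vector `Ψ ∈ ℂ^{8d}`,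
lying in the second block of `2d` entries. -/
def qEnt (d : ℕ) (Ψ : Fin 4 × Fin (2 * d) → ℂ) (k : ℤ) : ℂ :=
  if h : (((3 * (d : ℤ) - rv d - 1) / 2 - k).toNat) < 2 * d then
    Ψ (1, ⟨((3 * (d : ℤ) - rv d - 1) / 2 - k).toNat, h⟩) else 0

theorem rv_mul_d (d : ℕ) : rv d * (d : ℤ) = 2 * Lv d := by
  unfold rv Lv
  split_ifs with h
  · obtain ⟨m, rfl⟩ := h
    push_cast
    omega
  · ring

theorem e0_apply (d : ℕ) (C : ℤ → ℂ) (i j : Fin (2 * d)) :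
    e0mat d C i j = if (j : ℕ) ≤ (i : ℕ) ∧ (i : ℕ) ≤ (j : ℕ) + d then
      coeffC d C (d + j - i) else 0 := by
  simp only [e0mat, Matrix.of_apply, coeffC]
  by_cases h : (j : ℕ) ≤ (i : ℕ) ∧ (i : ℕ) ≤ (j : ℕ) + d
  · rw [if_pos h, if_pos (by omega)]
    congr 1
    have := rv_mul_d d
    rw [Nat.cast_sub (by omega), Nat.cast_sub (by omega)]
    push_cast
    linear_combination this
  · rw [if_neg h, if_neg (by omega)]

theorem lower_inj {N : ℕ} (A : Matrix (Fin N) (Fin N) ℂ)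
    (hl : ∀ i j, i < j → A i j = 0) (hdg : ∀ i, A i i ≠ 0) (s : Fin N → ℂ) (m : ℕ)
    (h : ∀ i : Fin N, (i : ℕ) < m → ∑ j, A i j * s j = 0) :
    ∀ i : Fin N, (i : ℕ) < m → s i = 0 := by
  intro i
  induction i using WellFoundedLT.induction with
  | ind i ih =>
    intro hi
    have := h i hi
    rw [Finset.sum_eq_single i] at this
    · exact (mul_eq_zero.mp this).resolve_left (hdg i)
    · intro j _ hj
      rcases lt_or_gt_of_ne hj with hj | hj
      · rw [ih j hj (lt_trans hj hi), mul_zero]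
      · rw [hl i j hj, zero_mul]
    · simp

theorem upper_inj {N : ℕ} (A : Matrix (Fin N) (Fin N) ℂ)
    (hl : ∀ i j, j < i → A i j = 0) (hdg : ∀ i, A i i ≠ 0) (s : Fin N → ℂ) (m : ℕ)
    (h : ∀ i : Fin N, m ≤ (i : ℕ) → ∑ j, A i j * s j = 0) :
    ∀ i : Fin N, m ≤ (i : ℕ) → s i = 0 := by
  intro i
  induction i using WellFoundedGT.induction with
  | ind i ih =>
    intro hi
    have := h i hi
    rw [Finset.sum_eq_single i] at this
    · exact (mul_eq_zero.mp this).resolve_left (hdg i)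
    · intro j _ hj
      rcases lt_or_gt_of_ne hj with hj | hj
      · rw [hl i j hj, zero_mul]
      · rw [ih j hj (le_trans hi (le_of_lt hj)), mul_zero]
    · simp

theorem key (d : ℕ) (C : ℤ → ℂ) (hC : C (-(Lv d)) ≠ 0)
    (n o : ℕ) (hon : o + n ≤ d) (hD : (SCL (coeffC d C) d n 1).det ≠ 0)
    (s t : Fin (2 * d) → ℂ)
    (h1 : ∀ i, ∑ j, e0mat d C i j * s j
      + ∑ j : Fin (2 * d), (if o + d ≤ (j : ℕ) ∧ (j : ℕ) < o + d + n then
          (e0mat d C)ᴴ i j else 0) * t j = 0)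
    (h2 : ∀ i, ∑ j, (e0mat d C)ᴴ i j * t j
      + ∑ j : Fin (2 * d), (if o ≤ (j : ℕ) ∧ (j : ℕ) < o + n then
          e0mat d C i j else 0) * s j = 0) :
    s = 0 ∧ t = 0 := by
  set A := e0mat d C with hA
  have hl : ∀ i j, i < j → A i j = 0 := by
    intro i j hij
    rw [hA, e0_apply, if_neg]
    have : (i : ℕ) < j := hij
    omega
  have hb : ∀ i j : Fin (2 * d), (j : ℕ) + d < i → A i j = 0 := by
    intro i j hij
    rw [hA, e0_apply, if_neg]
    omega
  have hdg : ∀ i, A i i ≠ 0 := by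
    intro i
    simpa [hA, e0mat] using hC
  have hu : ∀ i j, j < i → Aᴴ i j = 0 := by
    intro i j hij
    simp [Matrix.conjTranspose_apply, hl j i hij]
  have hub : ∀ i j : Fin (2 * d), (i : ℕ) + d < j → Aᴴ i j = 0 := by
    intro i j hij
    simp [Matrix.conjTranspose_apply, hb j i hij]
  have hudg : ∀ i, Aᴴ i i ≠ 0 := by
    intro i
    simpa [Matrix.conjTranspose_apply] using hdg i
  set X : Fin (2 * d) → ℂ := fun i => ∑ j : Fin (2 * d),
    (if o + d ≤ (j : ℕ) ∧ (j : ℕ) < o + d + n then Aᴴ i j else 0) * t j with hX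
  set Y : Fin (2 * d) → ℂ := fun i => ∑ j : Fin (2 * d),
    (if o ≤ (j : ℕ) ∧ (j : ℕ) < o + n then A i j else 0) * s j with hY
  have hs0 : ∀ i : Fin (2 * d), (i : ℕ) < o → s i = 0 := by
    apply lower_inj A hl hdg
    intro i hi
    have h := h1 i
    have : X i = 0 := by
      apply Finset.sum_eq_zero
      intro j _
      split_ifs with hj
      · rw [hub i j (by omega), zero_mul]
      · rw [zero_mul]
    change _ + X i = 0 at h
    rwa [this, add_zero] at h
  have ht0 : ∀ i : Fin (2 * d), o + d + n ≤ (i : ℕ) → t i = 0 := by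
    apply upper_inj Aᴴ hu hudg
    intro i hi
    have h := h2 i
    have : Y i = 0 := by
      apply Finset.sum_eq_zero
      intro j _
      split_ifs with hj
      · rw [hb i j (by omega), zero_mul]
      · rw [zero_mul]
    change _ + Y i = 0 at h
    rwa [this, add_zero] at h
  -- g vanishes
  have hg1 : ∀ i : Fin (2 * d), (i : ℕ) < o + n → Y i + X i = 0 := by
    intro i hi
    have h := h1 i
    change _ + X i = 0 at h
    rw [← h]
    congr 1
    apply Finset.sum_congr rfl
    intro j _
    split_ifs with hj
    · rfl
    · rcases lt_or_ge (j : ℕ) o with hj1 | hj1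
      · rw [hs0 j hj1]; simp
      · rw [hl i j (by rw [Fin.lt_def]; omega)]
  have hg2 : ∀ i : Fin (2 * d), o + d ≤ (i : ℕ) → Y i + X i = 0 := by
    intro i hi
    have h := h2 i
    change _ + Y i = 0 at h
    rw [← h, add_comm]
    congr 1
    apply Finset.sum_congr rfl
    intro j _
    split_ifs with hj
    · rfl
    · rcases lt_or_ge (j : ℕ) (o + d) with hj1 | hj1
      · rw [hu i j (by rw [Fin.lt_def]; omega)]
      · rw [ht0 j (by omega)]; simp
  -- restriction of sums
  have hYs : ∀ i, Y i = ∑ k : Fin n, A i ⟨o + k, by omega⟩ * s ⟨o + k, by omega⟩ := by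
    intro i
    symm
    apply Fintype.sum_of_injective (fun k : Fin n => (⟨o + k, by omega⟩ : Fin (2 * d)))
    · intro a b hab
      simp only [Fin.mk.injEq] at hab
      exact Fin.ext (by omega)
    · intro j hj
      rw [if_neg, zero_mul]
      intro hc
      exact hj ⟨⟨j - o, by omega⟩, Fin.ext (by simp; omega)⟩
    · intro k
      rw [if_pos]
      simp
  have hXs : ∀ i, X i = ∑ k : Fin n, Aᴴ i ⟨o + d + k, by omega⟩ * t ⟨o + d + k, by omega⟩ := by
    intro i
    symm
    apply Fintype.sum_of_injective (fun k : Fin n => (⟨o + d + k, by omega⟩ : Fin (2 * d)))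
    · intro a b hab
      simp only [Fin.mk.injEq] at hab
      exact Fin.ext (by omega)
    · intro j hj
      rw [if_neg, zero_mul]
      intro hc
      exact hj ⟨⟨j - (o + d), by omega⟩, Fin.ext (by simp; omega)⟩
    · intro k
      rw [if_pos]
      simp
  set v : Fin n ⊕ Fin n → ℂ := Sum.elim (fun k => s ⟨o + k, by omega⟩)
    (fun k => t ⟨o + d + k, by omega⟩) with hv
  have hker : (SCL (coeffC d C) d n 1) *ᵥ v = 0 := by
    funext p
    rcases p with j | j
    · have h := hg1 ⟨o + j, by omega⟩ (by simp)
      rw [hYs, hXs] at h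
      rw [Pi.zero_apply, ← h]
      simp only [Matrix.mulVec, dotProduct, Fintype.sum_sum_type, hv, Sum.elim_inl, Sum.elim_inr,
        SCL, one_smul, Matrix.fromBlocks_apply₁₁, Matrix.fromBlocks_apply₁₂]
      congr 1
      · apply Finset.sum_congr rfl
        intro k _
        congr 1
        rw [hA, e0_apply]
        simp only [Matrix.transpose_apply, SCM, Matrix.of_apply]
        by_cases hjk : (k : ℕ) ≤ j
        · rw [if_pos hjk, if_pos (by omega)]
          congr 1
          omega
        · rw [if_neg hjk, if_neg (by omega)]
      · apply Finset.sum_congr rfl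
        intro k _
        congr 1
        rw [hA, Matrix.conjTranspose_apply, Matrix.conjTranspose_apply, e0_apply]
        simp only [SCN, Matrix.of_apply]
        congr 1
        by_cases hjk : (k : ℕ) ≤ j
        · rw [if_pos hjk, if_pos (by omega)]
          congr 1
          omega
        · rw [if_neg hjk, if_neg (by omega)]
    · have h := hg2 ⟨o + d + j, by omega⟩ (by simp)
      rw [hYs, hXs] at h
      rw [Pi.zero_apply, ← h]
      simp only [Matrix.mulVec, dotProduct, Fintype.sum_sum_type, hv, Sum.elim_inl, Sum.elim_inr,
        SCL, one_smul, Matrix.fromBlocks_apply₂₁, Matrix.fromBlocks_apply₂₂]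
      congr 1
      · apply Finset.sum_congr rfl
        intro k _
        congr 1
        rw [hA, e0_apply]
        simp only [SCN, Matrix.of_apply]
        by_cases hjk : (j : ℕ) ≤ k
        · rw [if_pos hjk, if_pos (by omega)]
          congr 1
          omega
        · rw [if_neg hjk, if_neg (by omega)]
      · apply Finset.sum_congr rfl
        intro k _
        congr 1
        rw [hA, Matrix.conjTranspose_apply, e0_apply]
        simp only [SCM, Matrix.map_apply, Matrix.of_apply, starRingEnd_apply]
        congr 1
        by_cases hjk : (j : ℕ) ≤ k
        · rw [if_pos hjk, if_pos (by omega)]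
          congr 1
          omega
        · rw [if_neg hjk, if_neg (by omega)]
  have hv0 : v = 0 := Matrix.eq_zero_of_mulVec_eq_zero hD hker
  have hY0 : ∀ i, Y i = 0 := by
    intro i
    rw [hYs]
    apply Finset.sum_eq_zero
    intro k _
    have : v (Sum.inl k) = 0 := by rw [hv0]; rfl
    simp only [hv, Sum.elim_inl] at this
    rw [this, mul_zero]
  have hX0 : ∀ i, X i = 0 := by
    intro i
    rw [hXs]
    apply Finset.sum_eq_zero
    intro k _
    have : v (Sum.inr k) = 0 := by rw [hv0]; rfl
    simp only [hv, Sum.elim_inr] at this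
    rw [this, mul_zero]
  constructor
  · funext i
    refine lower_inj A hl hdg s (2 * d) (fun i _ => ?_) i i.2
    have h := h1 i
    change _ + X i = 0 at h
    rwa [hX0, add_zero] at h
  · funext i
    refine upper_inj Aᴴ hu hudg t 0 (fun i _ => ?_) i (Nat.zero_le _)
    have h := h2 i
    change _ + Y i = 0 at h
    rwa [hY0, add_zero] at h

theorem e1_apply (d n : ℕ) (C : ℤ → ℂ) (i j : Fin (2 * d)) :
    e1mat d n C i j = if d ≤ (j : ℕ) ∧ (j : ℕ) < d + n then e0mat d C j i else 0 := by
  rw [e0_apply]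
  simp only [e1mat, Matrix.of_apply, coeffC]
  by_cases h : d ≤ (j : ℕ) ∧ (j : ℕ) < d + n
  · rw [if_pos h]
    by_cases h' : (i : ℕ) ≤ (j : ℕ) ∧ (j : ℕ) ≤ (i : ℕ) + d
    · rw [if_pos h', if_pos (by omega), Nat.cast_sub (by omega)]
      congr 2
      push_cast
      ring
    · rw [if_neg h', if_neg (by omega)]
  · rw [if_neg h, if_neg (by omega)]

theorem e2_apply (d n : ℕ) (C : ℤ → ℂ) (i j : Fin (2 * d)) :
    e2mat d n C i j = if 2 * d ≤ (j : ℕ) + n then e0mat d C j i else 0 := by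
  rw [e0_apply]
  simp only [e2mat, Matrix.of_apply, coeffC]
  by_cases h : 2 * d ≤ (j : ℕ) + n
  · rw [if_pos h]
    by_cases h' : (i : ℕ) ≤ (j : ℕ) ∧ (j : ℕ) ≤ (i : ℕ) + d
    · rw [if_pos h', if_pos (by omega), Nat.cast_sub (by omega)]
      congr 2
      push_cast
      ring
    · rw [if_neg h', if_neg (by omega)]
  · rw [if_neg h, if_neg (by omega)]

theorem J_conj (d : ℕ) (M : Matrix (Fin (2 * d)) (Fin (2 * d)) ℂ) (i j : Fin (2 * d)) :
    (Jmat d * M * Jmat d) i j = M i.rev j.rev := by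
  have hJ : ∀ i j : Fin (2 * d), Jmat d i j = if j = i.rev then 1 else 0 := by
    intro i j
    simp only [Jmat, Matrix.of_apply]
    congr 1
    rw [Fin.ext_iff, Fin.val_rev, eq_iff_iff]
    omega
  have hJ' : ∀ i j : Fin (2 * d), Jmat d i j = if i = j.rev then 1 else 0 := by
    intro i j
    rw [hJ]
    congr 1
    rw [Fin.ext_iff, Fin.ext_iff, Fin.val_rev, Fin.val_rev, eq_iff_iff]
    omega
  simp only [Matrix.mul_apply]
  simp_rw [hJ i, hJ' _ j]
  simp

theorem e0_rev (d : ℕ) (C : ℤ → ℂ) (i j : Fin (2 * d)) :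
    e0mat d C j.rev i.rev = e0mat d C i j := by
  rw [e0_apply, e0_apply]
  simp only [Fin.val_rev]
  by_cases h' : (j : ℕ) ≤ (i : ℕ) ∧ (i : ℕ) ≤ (j : ℕ) + d
  · rw [if_pos h', if_pos (by omega)]
    congr 1
    omega
  · rw [if_neg h', if_neg (by omega)]

theorem bigE0_mulVec (d : ℕ) (C : ℤ → ℂ) (Φ : Fin 4 × Fin (2 * d) → ℂ) (b : Fin 4)
    (i : Fin (2 * d)) : (bigE0 d C *ᵥ Φ) (b, i) =
      ∑ j, (if (b : ℕ) ≤ 1 then e0mat d C i j else (e0mat d C)ᴴ i j) * Φ (b, j) := by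
  simp only [Matrix.mulVec, dotProduct, Fintype.sum_prod_type, bigE0, Matrix.of_apply]
  rw [Finset.sum_eq_single b]
  · simp
  · intro c _ hc
    simp [Ne.symm hc]
  · simp

theorem bigJ_mulVec (d : ℕ) (X : Fin 4 × Fin (2 * d) → ℂ) (b c : Fin 4)
    (h : ((b : ℕ) + 2) % 4 = c) (i : Fin (2 * d)) : (bigJ d *ᵥ X) (b, i) = X (c, i) := by
  simp only [Matrix.mulVec, dotProduct, Fintype.sum_prod_type, bigJ, Matrix.of_apply]
  rw [Finset.sum_eq_single c]
  · simp [h]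
  · intro c' _ hc
    apply Finset.sum_eq_zero
    intro j _
    rw [if_neg, zero_mul]
    rintro ⟨h1, _⟩
    exact hc (Fin.ext (by omega))
  · simp

theorem sharp0 (d n : ℕ) (hnd : n ≤ d) (C : ℤ → ℂ) (Φ : Fin 4 × Fin (2 * d) → ℂ)
    (i : Fin (2 * d)) : (bigEsharp d n C *ᵥ Φ) (0, i) =
      ∑ j : Fin (2 * d), (if (d - n) + d ≤ (j : ℕ) ∧ (j : ℕ) < (d - n) + d + n then
          (e0mat d C)ᴴ i j else 0) * Φ (2, j) := by
  simp only [Matrix.mulVec, dotProduct, Fintype.sum_prod_type, bigEsharp, Matrix.of_apply,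
    Fin.sum_univ_four]
  simp
  apply Finset.sum_congr rfl
  intro j _
  congr 1
  rw [e2_apply]
  by_cases h : 2 * d ≤ (j : ℕ) + n
  · rw [if_pos h, if_pos (by omega)]
  · rw [if_neg h, if_neg (by omega)]; simp

theorem sharp1 (d n : ℕ) (C : ℤ → ℂ) (Φ : Fin 4 × Fin (2 * d) → ℂ)
    (i : Fin (2 * d)) : (bigEsharp d n C *ᵥ Φ) (1, i) =
      ∑ j : Fin (2 * d), (if 0 + d ≤ (j : ℕ) ∧ (j : ℕ) < 0 + d + n then
          (e0mat d C)ᴴ i j else 0) * Φ (3, j) := by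
  simp only [Matrix.mulVec, dotProduct, Fintype.sum_prod_type, bigEsharp, Matrix.of_apply,
    Fin.sum_univ_four]
  simp
  apply Finset.sum_congr rfl
  intro j _
  congr 1
  rw [e1_apply]
  split_ifs <;> simp

theorem sharp2 (d n : ℕ) (hnd : n ≤ d) (C : ℤ → ℂ) (Φ : Fin 4 × Fin (2 * d) → ℂ)
    (i : Fin (2 * d)) : (bigEsharp d n C *ᵥ Φ) (2, i) =
      ∑ j : Fin (2 * d), (if (d - n) ≤ (j : ℕ) ∧ (j : ℕ) < (d - n) + n then
          e0mat d C i j else 0) * Φ (0, j) := by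
  simp only [Matrix.mulVec, dotProduct, Fintype.sum_prod_type, bigEsharp, Matrix.of_apply,
    Fin.sum_univ_four, J_conj, e1_apply, e2_apply, e0_rev]
  simp
  apply Finset.sum_congr rfl
  intro j _
  by_cases h : d - n ≤ (j : ℕ) ∧ (j : ℕ) < d - n + n
  · rw [if_pos (by omega), if_pos (by omega)]
  · rw [if_neg (by omega), if_neg (by omega)]

theorem sharp3 (d n : ℕ) (C : ℤ → ℂ) (Φ : Fin 4 × Fin (2 * d) → ℂ)
    (i : Fin (2 * d)) : (bigEsharp d n C *ᵥ Φ) (3, i) =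
      ∑ j : Fin (2 * d), (if 0 ≤ (j : ℕ) ∧ (j : ℕ) < 0 + n then
          e0mat d C i j else 0) * Φ (1, j) := by
  simp only [Matrix.mulVec, dotProduct, Fintype.sum_prod_type, bigEsharp, Matrix.of_apply,
    Fin.sum_univ_four, J_conj, e1_apply, e2_apply, e0_rev]
  simp
  apply Finset.sum_congr rfl
  intro j _
  by_cases h : (j : ℕ) < n
  · rw [if_pos (by omega), if_pos (by omega)]
  · rw [if_neg (by omega), if_neg (by omega)]

/-- Lemma 3.8: `p_n^+(k) + conj(q_n^+(k)) = p_n^-(k) − conj(q_n^-(k))` for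
`−(d+r−1)/2 ≤ k ≤ (d−r+1)/2 + n − 1` and `0 ≤ n ≤ d`. -/
theorem p_plus_conj_q_plus_eq_p_minus_conj_q_minus
    (d : ℕ) (hd : 0 < d) (C : ℤ → ℂ) (hC : C (Lv d) * C (-(Lv d)) ≠ 0)
    (n : ℕ) (hnd : n ≤ d) (hD : SCD d C n ≠ 0)
    (Φp Φm : Fin 4 × Fin (2 * d) → ℂ)
    (hΦp : (bigE0 d C + bigEsharp d n C).mulVec Φp
      = (bigE0 d C).mulVec (chiVec d) - (bigJ d).mulVec ((bigE0 d C).mulVec (chiVec d)))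
    (hΦm : (bigE0 d C - bigEsharp d n C).mulVec Φm
      = (bigE0 d C).mulVec (chiVec d) + (bigJ d).mulVec ((bigE0 d C).mulVec (chiVec d))) :
    ∀ k : ℤ, -(((d : ℤ) + rv d - 1) / 2) ≤ k → k ≤ ((d : ℤ) - rv d + 1) / 2 + n - 1 →
      pEnt d ((bigE0 d C).mulVec (Φp + chiVec d)) k
          + (starRingEnd ℂ) (qEnt d ((bigE0 d C).mulVec (Φp + chiVec d)) k)
        = pEnt d ((bigE0 d C).mulVec (Φm + chiVec d)) k
          - (starRingEnd ℂ) (qEnt d ((bigE0 d C).mulVec (Φm + chiVec d)) k) := by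
  have hD' : (SCL (coeffC d C) d n 1).det ≠ 0 := by
    unfold SCD at hD
    split_ifs at hD with h
    · subst h
      simp
    · exact hD
  have hC' : C (-(Lv d)) ≠ 0 := right_ne_zero_of_mul hC
  have hX1 : ∀ i, (bigE0 d C *ᵥ chiVec d) (1, i) = 0 := by
    intro i
    rw [bigE0_mulVec]
    simp [chiVec]
  have hX2 : ∀ i, (bigE0 d C *ᵥ chiVec d) (2, i) = 0 := by
    intro i
    rw [bigE0_mulVec]
    simp [chiVec]
  rw [Matrix.add_mulVec] at hΦp
  rw [Matrix.sub_mulVec] at hΦm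
  have P := fun b i => congrFun hΦp (b, i)
  have M := fun b i => congrFun hΦm (b, i)
  simp only [Pi.add_apply, Pi.sub_apply] at P M
  obtain ⟨hs, ht⟩ := key d C hC' n (d - n) (by omega) hD'
    (fun j => Φp (0, j) - Φm (0, j)) (fun j => Φp (2, j) + Φm (2, j))
    (by
      intro i
      have p := P 0 i
      have m := M 0 i
      rw [bigJ_mulVec d _ 0 2 rfl, hX2, bigE0_mulVec, sharp0 d n hnd] at p m
      simp only [Fin.val_zero, zero_le, if_true, mul_sub, mul_add, Finset.sum_sub_distrib,
        Finset.sum_add_distrib] at p m ⊢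
      linear_combination p - m)
    (by
      intro i
      have p := P 2 i
      have m := M 2 i
      rw [bigJ_mulVec d _ 2 0 rfl, hX2, bigE0_mulVec, sharp2 d n hnd] at p m
      have h2 : ¬ (((2 : Fin 4) : ℕ) ≤ 1) := by decide
      simp only [h2, if_false, mul_sub, mul_add, Finset.sum_sub_distrib,
        Finset.sum_add_distrib] at p m ⊢
      linear_combination p + m)
  obtain ⟨hb, he⟩ := key d C hC' n 0 (by omega) hD'
    (fun j => Φp (1, j) + Φm (1, j)) (fun j => Φp (3, j) - Φm (3, j))
    (by
      intro i
      have p := P 1 i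
      have m := M 1 i
      rw [bigJ_mulVec d _ 1 3 rfl, hX1, bigE0_mulVec, sharp1 d n] at p m
      have h2 : (((1 : Fin 4) : ℕ) ≤ 1) := by decide
      simp only [h2, if_true, mul_sub, mul_add, Finset.sum_sub_distrib,
        Finset.sum_add_distrib] at p m ⊢
      linear_combination p + m)
    (by
      intro i
      have p := P 3 i
      have m := M 3 i
      rw [bigJ_mulVec d _ 3 1 rfl, hX1, bigE0_mulVec, sharp3 d n] at p m
      have h2 : ¬ (((3 : Fin 4) : ℕ) ≤ 1) := by decide
      simp only [h2, if_false, mul_sub, mul_add, Finset.sum_sub_distrib,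
        Finset.sum_add_distrib] at p m ⊢
      linear_combination p - m)
  have e0 : ∀ i, (bigE0 d C *ᵥ (Φp + chiVec d)) (0, i)
      = (bigE0 d C *ᵥ (Φm + chiVec d)) (0, i) := by
    intro i
    rw [bigE0_mulVec, bigE0_mulVec]
    apply Finset.sum_congr rfl
    intro j _
    have := congrFun hs j
    simp only [Pi.zero_apply, sub_eq_zero] at this
    simp only [Pi.add_apply, this]
  have e1 : ∀ i, (bigE0 d C *ᵥ (Φp + chiVec d)) (1, i)
      = -(bigE0 d C *ᵥ (Φm + chiVec d)) (1, i) := by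
    intro i
    rw [Matrix.mulVec_add, Matrix.mulVec_add, Pi.add_apply, Pi.add_apply, hX1, add_zero, add_zero,
      bigE0_mulVec, bigE0_mulVec, ← Finset.sum_neg_distrib]
    apply Finset.sum_congr rfl
    intro j _
    have := congrFun hb j
    simp only [Pi.zero_apply] at this
    rw [eq_neg_of_add_eq_zero_left this, mul_neg]
  intro k _ _
  have hp : pEnt d (bigE0 d C *ᵥ (Φp + chiVec d)) k
      = pEnt d (bigE0 d C *ᵥ (Φm + chiVec d)) k := by
    unfold pEnt
    split_ifs
    · exact e0 _
    · rfl
  have hq : qEnt d (bigE0 d C *ᵥ (Φp + chiVec d)) k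
      = -qEnt d (bigE0 d C *ᵥ (Φm + chiVec d)) k := by
    unfold qEnt
    split_ifs
    · exact e1 _
    · simp
  rw [hp, hq, map_neg, sub_eq_add_neg]

end
end
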